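/- Let A be a set with a length function μ. Under the natural embedding F(A) ≤ F_ℝ(A) (sending each generator a to a(1)), the restriction of the pseudonorm ‖·‖_{F_ℝ(A;μ)} to F(A) coincides with the word pseudonorm ‖·‖_{F(A;μ)}: for every w ∈ F(A), ‖w‖_{F_ℝ(A;μ)} = ‖w‖_{F(A;μ)}. -/

import Mathlib

/-!
An element of a free product is spelled by lists of syllables, and a list collapses by erasing
syllables, each at the cost of its seminorm, and by multiplying adjacent syllables of the same
factor for free. A diamond argument in which costs are tracked shows that an edit of the list
(erasing, merging or replacing a syllable) raises the cost of a collapse by at most the cost of the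
edit. Since every list reduces to its normal form by edits of cost zero, and these edits also extend
a collapse at no cost, the cost of collapsing a list depends only on the element spelled.
An expression of an element as a product of conjugates of generators can be written as a list that
collapses at the length of the expression, so every other list spelling that element collapses at
no greater cost. For an element of `F(A)` choose a list with integral exponents: its collapse only
erases and merges, so it meets integral exponents only and can be read as an expression in `F(A)`.
-/

/-- The set of total lengths of expressions of `g` as a product of conjugates
of generators `gen i ^ {±1}`, each weighted by the length function `ℓ`. -/
def wordNormSet {G : Type*} [Group G] {I : Type*}
    (gen : I → G) (ℓ : I → ℝ) (g : G) : Set ℝ :=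
  { x | ∃ l : List (G × I × Bool),
      g = (l.map fun p => p.1 * (if p.2.2 then gen p.2.1 else (gen p.2.1)⁻¹) * p.1⁻¹).prod ∧
      x = (l.map fun p => ℓ p.2.1).sum }

/-- The conjugation-invariant word norm associated to a length function. -/
noncomputable def wordNorm {G : Type*} [Group G] {I : Type*}
    (gen : I → G) (ℓ : I → ℝ) (g : G) : ℝ :=
  sInf (wordNormSet gen ℓ g)

/-- `F_ℝ(A)`: the free product of copies of `ℝ` indexed by `A`. -/
abbrev FR (A : Type*) : Type _ := Monoid.CoprodI (fun _ : A => Multiplicative ℝ)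

/-- The generator `a(r)` of `F_ℝ(A)`. -/
def genFR (A : Type*) (p : A × ℝ) : FR A :=
  Monoid.CoprodI.of (i := p.1) (Multiplicative.ofAdd p.2)

/-- The conjugation-invariant word norm `‖·‖_{F_ℝ(A;μ)}`. -/
noncomputable def FRnorm {A : Type*} (μ : A → ℝ) : FR A → ℝ :=
  wordNorm (genFR A) (fun p => |p.2| * μ p.1)

/-- The natural embedding `F(A) → F_ℝ(A)` sending each generator `a` to `a(1)`. -/
noncomputable def FGtoFR (A : Type*) : FreeGroup A →* FR A :=
  FreeGroup.lift (fun a => genFR A (a, (1 : ℝ)))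

open Monoid.CoprodI
open scoped NNReal

section WordNormSet

variable {G H I J : Type*} [Group G] [Group H] {gen : I → G} {ℓ : I → ℝ} {g h : G} {c d : ℝ}

theorem zero_mem_wordNormSet_one (gen : I → G) (ℓ : I → ℝ) : 0 ∈ wordNormSet gen ℓ 1 :=
  ⟨[], by simp, by simp⟩

theorem mem_wordNormSet_gen (gen : I → G) (ℓ : I → ℝ) (i : I) : ℓ i ∈ wordNormSet gen ℓ (gen i) :=
  ⟨[(1, i, true)], by simp, by simp⟩

theorem mem_wordNormSet_gen_inv (gen : I → G) (ℓ : I → ℝ) (i : I) :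
    ℓ i ∈ wordNormSet gen ℓ (gen i)⁻¹ :=
  ⟨[(1, i, false)], by simp, by simp⟩

theorem add_mem_wordNormSet_mul (hc : c ∈ wordNormSet gen ℓ g) (hd : d ∈ wordNormSet gen ℓ h) :
    c + d ∈ wordNormSet gen ℓ (g * h) := by
  obtain ⟨l, rfl, rfl⟩ := hc
  obtain ⟨m, rfl, rfl⟩ := hd
  exact ⟨l ++ m, by simp, by simp⟩

theorem mul_mem_wordNormSet_pow (hc : c ∈ wordNormSet gen ℓ g) (n : ℕ) :
    n * c ∈ wordNormSet gen ℓ (g ^ n) := by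
  induction n with
  | zero => simpa using zero_mem_wordNormSet_one gen ℓ
  | succ n ih => simpa [pow_succ, add_mul] using add_mem_wordNormSet_mul ih hc

theorem mem_wordNormSet_conj (hc : c ∈ wordNormSet gen ℓ g) (h : G) :
    c ∈ wordNormSet gen ℓ (h * g * h⁻¹) := by
  obtain ⟨l, rfl, rfl⟩ := hc
  refine ⟨l.map fun p => (h * p.1, p.2), ?_, by simp [Function.comp_def]⟩
  rw [← MulAut.conj_apply, map_list_prod]
  simp [Function.comp_def, mul_assoc]

theorem wordNormSet_subset_map {gen' : J → H} {ℓ' : J → ℝ} (φ : G →* H) (e : I → J)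
    (hgen : ∀ i, gen' (e i) = φ (gen i)) (hℓ : ∀ i, ℓ' (e i) = ℓ i) (g : G) :
    wordNormSet gen ℓ g ⊆ wordNormSet gen' ℓ' (φ g) := by
  rintro _ ⟨l, rfl, rfl⟩
  refine ⟨l.map fun p => (φ p.1, e p.2.1, p.2.2), ?_, by simp [Function.comp_def, hℓ]⟩
  simp [map_list_prod, Function.comp_def, hgen, apply_ite φ]

theorem wordNorm_comp_equiv (e : I ≃ J) (gen : J → G) (ℓ : J → ℝ) (g : G) :
    wordNorm (gen ∘ e) (ℓ ∘ e) g = wordNorm gen ℓ g := by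
  refine congrArg sInf (Set.Subset.antisymm ?_ ?_)
  · exact wordNormSet_subset_map (.id G) e (by simp) (by simp) g
  · exact wordNormSet_subset_map (.id G) e.symm (by simp) (by simp) g

end WordNormSet

/-- A seminorm on a group is conjugation-invariant; equivalently, `d(g, h) = ν (g / h)` is
invariant under multiplication on both sides. -/
def IsConjInvariant {H : Type*} [Group H] (ν : GroupSeminorm H) : Prop :=
  ∀ g h, ν (g * h * g⁻¹) = ν h

section IsConjInvariant

theorem isConjInvariant_of_comm {H : Type*} [CommGroup H] (ν : GroupSeminorm H) :
    IsConjInvariant ν :=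
  fun g h => by rw [mul_inv_cancel_comm]

variable {H : Type*} [Group H] {ν : GroupSeminorm H}

theorem IsConjInvariant.map_mul_div_left (hν : IsConjInvariant ν) (g h : H) :
    ν (g * h / g) = ν h := by
  rw [div_eq_mul_inv, hν]

theorem IsConjInvariant.map_mul_div_mul_left (hν : IsConjInvariant ν) (g h k : H) :
    ν (g * h / (g * k)) = ν (h / k) := by
  rw [← hν g (h / k)]
  simp [div_eq_mul_inv, mul_assoc]

end IsConjInvariant

section Reduction

variable {ι : Type*} {G : ι → Type*} [∀ i, Group (G i)]

/-- The element of the free product spelled by a list of syllables. -/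
def syllableProd (L : List (Σ i, G i)) : Monoid.CoprodI G :=
  (L.map fun s => of s.2).prod

@[simp]
theorem syllableProd_nil : syllableProd ([] : List (Σ i, G i)) = 1 := rfl

@[simp]
theorem syllableProd_cons (s : Σ i, G i) (L : List (Σ i, G i)) :
    syllableProd (s :: L) = of s.2 * syllableProd L := by
  simp [syllableProd]

@[simp]
theorem syllableProd_append (L M : List (Σ i, G i)) :
    syllableProd (L ++ M) = syllableProd L * syllableProd M := by
  simp [syllableProd]

/-- `ReductionStep ν L M c`: at most one erasure of a syllable, at the cost of its seminorm, or one
free multiplication of two adjacent syllables of the same factor turns the list `L` into `M`, at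
total cost `c`. The trivial step is obtained from `nil` and `cons`. -/
inductive ReductionStep (ν : ∀ i, GroupSeminorm (G i)) :
    List (Σ i, G i) → List (Σ i, G i) → ℝ → Prop
  | nil : ReductionStep ν [] [] 0
  | erase (i : ι) (g : G i) (L : List (Σ i, G i)) : ReductionStep ν (⟨i, g⟩ :: L) L (ν i g)
  | merge (i : ι) (g h : G i) (L : List (Σ i, G i)) :
      ReductionStep ν (⟨i, g⟩ :: ⟨i, h⟩ :: L) (⟨i, g * h⟩ :: L) 0
  | cons (s : Σ i, G i) {L M : List (Σ i, G i)} {c : ℝ} :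
      ReductionStep ν L M c → ReductionStep ν (s :: L) (s :: M) c

/-- `EditStep ν L M c`: a reduction step or the replacement of one syllable by another one of the
same factor, at the cost of their distance, turns the list `L` into `M`. Replacements are kept apart
from reduction steps because they can introduce syllables outside of a given subgroup. -/
inductive EditStep (ν : ∀ i, GroupSeminorm (G i)) : List (Σ i, G i) → List (Σ i, G i) → ℝ → Prop
  | nil : EditStep ν [] [] 0
  | erase (i : ι) (g : G i) (L : List (Σ i, G i)) : EditStep ν (⟨i, g⟩ :: L) L (ν i g)
  | merge (i : ι) (g h : G i) (L : List (Σ i, G i)) :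
      EditStep ν (⟨i, g⟩ :: ⟨i, h⟩ :: L) (⟨i, g * h⟩ :: L) 0
  | change (i : ι) (g h : G i) (L : List (Σ i, G i)) :
      EditStep ν (⟨i, g⟩ :: L) (⟨i, h⟩ :: L) (ν i (g / h))
  | cons (s : Σ i, G i) {L M : List (Σ i, G i)} {c : ℝ} :
      EditStep ν L M c → EditStep ν (s :: L) (s :: M) c

/-- `Collapses ν L c`: reduction steps of total cost at most `c` turn the list `L` into the empty
list. -/
inductive Collapses (ν : ∀ i, GroupSeminorm (G i)) : List (Σ i, G i) → ℝ → Prop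
  | nil {c : ℝ} : 0 ≤ c → Collapses ν [] c
  | step {L M : List (Σ i, G i)} {c d e : ℝ} :
      ReductionStep ν L M c → Collapses ν M d → c + d ≤ e → Collapses ν L e

variable {ν : ∀ i, GroupSeminorm (G i)} {L L' M : List (Σ i, G i)} {c d : ℝ}

theorem ReductionStep.refl (ν : ∀ i, GroupSeminorm (G i)) :
    ∀ L : List (Σ i, G i), ReductionStep ν L L 0
  | [] => .nil
  | s :: L => .cons s (refl ν L)

theorem ReductionStep.append_left (K : List (Σ i, G i)) (h : ReductionStep ν L M c) :
    ReductionStep ν (K ++ L) (K ++ M) c := by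
  induction K with
  | nil => exact h
  | cons s K ih => exact ih.cons s

theorem ReductionStep.editStep (h : ReductionStep ν L M c) : EditStep ν L M c := by
  induction h with
  | nil => exact .nil
  | erase i g L => exact .erase i g L
  | merge i g h L => exact .merge i g h L
  | cons s _ ih => exact .cons s ih

theorem EditStep.refl (ν : ∀ i, GroupSeminorm (G i)) (L : List (Σ i, G i)) : EditStep ν L L 0 :=
  (ReductionStep.refl ν L).editStep

/-- `JoinableWithin ν M L' e`: the diamond with sides `L → M` and `L → L'` can be closed by an edit
step from `M` and a reduction step from `L'`, of total cost at most `e`. -/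
def JoinableWithin (ν : ∀ i, GroupSeminorm (G i)) (M L' : List (Σ i, G i)) (e : ℝ) : Prop :=
  ∃ N c d, EditStep ν M N c ∧ ReductionStep ν L' N d ∧ c + d ≤ e

theorem EditStep.joinableWithin {e : ℝ} (h : EditStep ν M L' c) (hc : c ≤ e) :
    JoinableWithin ν M L' e :=
  ⟨L', c, 0, h, .refl ν L', by simpa using hc⟩

theorem ReductionStep.joinableWithin {e : ℝ} (h : ReductionStep ν L' M c) (hc : c ≤ e) :
    JoinableWithin ν M L' e :=
  ⟨M, 0, c, .refl ν M, h, by simpa using hc⟩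

theorem JoinableWithin.cons {e : ℝ} (s : Σ i, G i) :
    JoinableWithin ν M L' e → JoinableWithin ν (s :: M) (s :: L') e
  | ⟨N, c, d, hM, hL', he⟩ => ⟨s :: N, c, d, hM.cons s, hL'.cons s, he⟩

theorem JoinableWithin.of_erase {i : ι} {g : G i} (h : EditStep ν (⟨i, g⟩ :: L) L' d) :
    JoinableWithin ν L L' (ν i g + d) := by
  cases h with
  | erase => exact (EditStep.refl ν L).joinableWithin (by linarith [apply_nonneg (ν i) g])
  | merge _ _ k L =>
    exact (EditStep.change i k (g * k) L).joinableWithin (by simp)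
  | change _ _ k =>
    exact (ReductionStep.erase i k L).joinableWithin
      (by linarith [le_map_add_map_div (ν i) k g, map_div_rev (ν i) g k])
  | cons _ h => exact ⟨_, _, _, h, .erase i g _, (add_comm _ _).le⟩

theorem JoinableWithin.of_merge (hν : ∀ i, IsConjInvariant (ν i)) {i : ι}
    {g h : G i} (hL' : EditStep ν (⟨i, g⟩ :: ⟨i, h⟩ :: L) L' d) :
    JoinableWithin ν (⟨i, g * h⟩ :: L) L' d := by
  cases hL' with
  | erase => exact (EditStep.change i (g * h) h L).joinableWithin (by simp)
  | merge => exact (EditStep.refl ν _).joinableWithin le_rfl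
  | change _ _ k =>
    exact ⟨_, _, _, .change i (g * h) (k * h) L, .merge i k h L, by simp⟩
  | cons _ hL' =>
    cases hL' with
    | erase =>
      exact (EditStep.change i (g * h) g L).joinableWithin ((hν i).map_mul_div_left g h).le
    | merge _ _ k L =>
      refine ⟨_, _, _, .merge i (g * h) k L, ?_, (add_zero 0).le⟩
      simpa [mul_assoc] using ReductionStep.merge (ν := ν) i g (h * k) L
    | change _ _ k =>
      exact ⟨_, _, _, .change i (g * h) (g * k) L, .merge i g k L,
        by simp [(hν i).map_mul_div_mul_left]⟩
    | cons _ hL' => exact ⟨_, _, _, hL'.cons _, .merge i g h _, (add_zero _).le⟩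

theorem JoinableWithin.of_cons_of_merge (hν : ∀ i, IsConjInvariant (ν i)) {i : ι}
    {g h : G i} (hM : ReductionStep ν (⟨i, h⟩ :: L) M c) :
    JoinableWithin ν (⟨i, g⟩ :: M) (⟨i, g * h⟩ :: L) c := by
  cases hM with
  | erase =>
    exact (EditStep.change i g (g * h) L).joinableWithin
      (by rw [map_div_rev, (hν i).map_mul_div_left])
  | merge _ _ k L =>
    refine ⟨_, _, _, .merge i g (h * k) L, ?_, (add_zero 0).le⟩
    simpa [mul_assoc] using ReductionStep.merge (ν := ν) i (g * h) k L
  | cons _ hM => exact ⟨_, _, _, .merge i g h _, hM.cons _, (zero_add _).le⟩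

theorem ReductionStep.joinableWithin_of_editStep (hν : ∀ i, IsConjInvariant (ν i))
    (hM : ReductionStep ν L M c) (hL' : EditStep ν L L' d) : JoinableWithin ν M L' (c + d) := by
  induction hM generalizing L' d with
  | nil => exact hL'.joinableWithin (zero_add d).ge
  | erase => exact .of_erase hL'
  | merge => simpa using JoinableWithin.of_merge hν hL'
  | cons s hM ih =>
    cases hL' with
    | erase i g L => exact ⟨_, _, _, .erase i g _, hM, (add_comm _ _).le⟩
    | merge i g h L => simpa using JoinableWithin.of_cons_of_merge hν hM
    | change i g h L =>
      exact ⟨_, _, _, .change i g h _, hM.cons _, (add_comm _ _).le⟩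
    | cons _ hL' => exact (ih hL').cons s

theorem Collapses.of_editStep (hν : ∀ i, IsConjInvariant (ν i))
    (hL : Collapses ν L c) (h : EditStep ν L L' d) : Collapses ν L' (c + d) := by
  induction hL generalizing L' d with
  | nil hc => cases h; exact .nil (by simpa using hc)
  | step hM _ hc ih =>
    obtain ⟨N, _, _, hMN, hL'N, hd⟩ := hM.joinableWithin_of_editStep hν h
    exact .step hL'N (ih hMN) (by linarith)

/-- `FreelyReduces ν L M`: reduction steps of cost zero turn the list `L` into `M`. -/
def FreelyReduces (ν : ∀ i, GroupSeminorm (G i)) : List (Σ i, G i) → List (Σ i, G i) → Prop :=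
  Relation.ReflTransGen fun L M => ReductionStep ν L M 0

theorem FreelyReduces.cons (s : Σ i, G i) (h : FreelyReduces ν L M) :
    FreelyReduces ν (s :: L) (s :: M) :=
  Relation.ReflTransGen.lift (s :: ·) (fun _ _ hLM => hLM.cons s) _ _ h

theorem FreelyReduces.collapses_iff (hν : ∀ i, IsConjInvariant (ν i))
    (h : FreelyReduces ν L M) : Collapses ν L c ↔ Collapses ν M c := by
  induction h with
  | refl => rfl
  | tail _ h ih =>
    exact ih.trans
      ⟨fun hL => by simpa using hL.of_editStep hν h.editStep, fun hM => .step h hM (zero_add c).le⟩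

section NormalForm

variable [∀ i, DecidableEq (G i)]

theorem freelyReduces_rcons {i : ι} (p : Word.Pair G i) :
    FreelyReduces ν (⟨i, p.head⟩ :: p.tail.toList) (Word.rcons p).toList := by
  by_cases hp : p.head = 1
  · refine .single ?_
    simpa [Word.rcons, hp] using ReductionStep.erase (ν := ν) i 1 p.tail.toList
  · simpa [Word.rcons, hp] using .refl

variable [DecidableEq ι]

theorem freelyReduces_of_smul {i : ι} (g : G i) (w : Word G) :
    FreelyReduces ν (⟨i, g⟩ :: w.toList) (of g • w).toList := by
  obtain ⟨p, rfl⟩ := (Word.equivPair i).symm.surjective w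
  rw [Word.of_smul_def, Equiv.apply_symm_apply, Word.equivPair_symm]
  refine .trans ?_ (freelyReduces_rcons { p with head := g * p.head })
  by_cases hp : p.head = 1
  · simpa [Word.rcons, hp] using .refl
  · simpa [Word.rcons, hp] using .single (.merge i g p.head p.tail.toList)

theorem freelyReduces_equiv_syllableProd (ν : ∀ i, GroupSeminorm (G i)) (L : List (Σ i, G i)) :
    FreelyReduces ν L (Word.equiv (syllableProd L)).toList := by
  induction L with
  | nil => simpa [Word.equiv] using .refl
  | cons s L ih =>
    have hsmul : Word.equiv (syllableProd (s :: L)) = of s.2 • Word.equiv (syllableProd L) := by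
      simp [Word.equiv, mul_smul]
    rw [hsmul]
    exact (ih.cons s).trans (freelyReduces_of_smul s.2 _)

end NormalForm

theorem collapses_congr (hν : ∀ i, IsConjInvariant (ν i))
    (h : syllableProd L = syllableProd L') : Collapses ν L c ↔ Collapses ν L' c := by
  classical
  rw [(freelyReduces_equiv_syllableProd ν L).collapses_iff hν, h,
    ← (freelyReduces_equiv_syllableProd ν L').collapses_iff hν]

theorem syllableProd_surjective :
    Function.Surjective (syllableProd : List (Σ i, G i) → Monoid.CoprodI G) := by
  classical
  exact fun g => ⟨(Word.equiv g).toList, Word.equiv.symm_apply_apply g⟩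

theorem Collapses.conj_append (hν : ∀ i, IsConjInvariant (ν i))
    {K K' : List (Σ i, G i)} {i : ι} (g : G i) (hK : syllableProd K' = (syllableProd K)⁻¹)
    (hL : Collapses ν L c) : Collapses ν (K ++ ⟨i, g⟩ :: (K' ++ L)) (ν i g + c) := by
  have hKL : Collapses ν (K ++ (K' ++ L)) c := (collapses_congr hν (by simp [hK])).1 hL
  exact .step ((ReductionStep.erase i g _).append_left K) hKL le_rfl

theorem collapses_of_mem_wordNormSet (hν : ∀ i, IsConjInvariant (ν i))
    (h : c ∈ wordNormSet (fun s : Σ i, G i => of s.2) (fun s => ν s.1 s.2) (syllableProd L)) :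
    Collapses ν L c := by
  obtain ⟨l, hl, rfl⟩ := h
  induction l generalizing L with
  | nil => exact (collapses_congr hν (by simpa using hl)).2 (.nil le_rfl)
  | cons p l ih =>
    obtain ⟨k, ⟨i, g⟩, b⟩ := p
    obtain ⟨K, rfl⟩ := syllableProd_surjective k
    obtain ⟨K', hK'⟩ := syllableProd_surjective (syllableProd K)⁻¹
    obtain ⟨M, hM⟩ := syllableProd_surjective
      (l.map fun p => p.1 * (if p.2.2 then of p.2.1.2 else (of p.2.1.2)⁻¹) * p.1⁻¹).prod
    have hcollapse := (ih hM).conj_append hν (if b then g else g⁻¹) hK'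
    rw [collapses_congr hν (L' := K ++ ⟨i, if b then g else g⁻¹⟩ :: (K' ++ M))]
    · cases b <;> simpa using hcollapse
    · cases b <;> simp [hl, hM, hK', mul_assoc]

end Reduction

section IntegralSyllables

variable {ι : Type*} {G : ι → Type*} [∀ i, Group (G i)] {ν : ∀ i, GroupSeminorm (G i)}
  {x : ∀ i, G i}

/-- The element of the free group spelled by a list of pairs `(i, n)`, read as `i ^ n`. -/
def zpowProd {α : Type*} (L : List (α × ℤ)) : FreeGroup α :=
  (L.map fun p => FreeGroup.of p.1 ^ p.2).prod

/-- The list of syllables `x i ^ n` given by a list of pairs `(i, n)`. -/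
def zpowSyllables (x : ∀ i, G i) (L : List (ι × ℤ)) : List (Σ i, G i) :=
  L.map fun p => ⟨p.1, x p.1 ^ p.2⟩

@[simp]
theorem zpowProd_nil {α : Type*} : zpowProd ([] : List (α × ℤ)) = 1 := rfl

@[simp]
theorem zpowProd_cons {α : Type*} (a : α) (n : ℤ) (L : List (α × ℤ)) :
    zpowProd ((a, n) :: L) = FreeGroup.of a ^ n * zpowProd L := by
  simp [zpowProd]

@[simp]
theorem zpowSyllables_cons (x : ∀ i, G i) (i : ι) (n : ℤ) (L : List (ι × ℤ)) :
    zpowSyllables x ((i, n) :: L) = ⟨i, x i ^ n⟩ :: zpowSyllables x L := rfl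

theorem zpowProd_surjective {α : Type*} :
    Function.Surjective (zpowProd : List (α × ℤ) → FreeGroup α) := by
  intro w
  induction w using FreeGroup.induction_on with
  | C1 => exact ⟨[], rfl⟩
  | of a => exact ⟨[(a, 1)], by simp⟩
  | inv_of a _ => exact ⟨[(a, -1)], by simp⟩
  | mul v w hv hw =>
    obtain ⟨L, rfl⟩ := hv
    obtain ⟨M, rfl⟩ := hw
    exact ⟨L ++ M, by simp [zpowProd]⟩

theorem syllableProd_zpowSyllables (x : ∀ i, G i) (L : List (ι × ℤ)) :
    syllableProd (zpowSyllables x L) = FreeGroup.lift (fun i => of (x i)) (zpowProd L) := by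
  simp [syllableProd, zpowSyllables, zpowProd, map_list_prod, Function.comp_def]

theorem seminorm_zpow_mem_wordNormSet (hx : ∀ i (n : ℕ), ν i (x i ^ n) = n * ν i (x i)) (i : ι)
    (n : ℤ) : ν i (x i ^ n) ∈
      wordNormSet FreeGroup.of (fun i => ν i (x i)) (FreeGroup.of i ^ n) := by
  obtain ⟨k, rfl | rfl⟩ := n.eq_nat_or_neg
  · simpa [hx] using mul_mem_wordNormSet_pow (mem_wordNormSet_gen _ (fun i => ν i (x i)) i) k
  · simpa [hx] using mul_mem_wordNormSet_pow (mem_wordNormSet_gen_inv _ (fun i => ν i (x i)) i) k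

theorem ReductionStep.exists_zpowSyllables_eq
    (hx : ∀ i (n : ℕ), ν i (x i ^ n) = n * ν i (x i)) {L : List (ι × ℤ)} {M : List (Σ i, G i)}
    {c : ℝ} (h : ReductionStep ν (zpowSyllables x L) M c) :
    ∃ M', zpowSyllables x M' = M ∧
      c ∈ wordNormSet FreeGroup.of (fun i => ν i (x i)) (zpowProd L * (zpowProd M')⁻¹) := by
  induction L generalizing M c with
  | nil =>
    cases h
    exact ⟨[], rfl, by simpa using zero_mem_wordNormSet_one _ _⟩
  | cons p L ih =>
    obtain ⟨i, n⟩ := p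
    rw [zpowSyllables_cons] at h
    generalize hK : zpowSyllables x L = K at h
    cases h with
    | erase => exact ⟨L, hK, by simpa using seminorm_zpow_mem_wordNormSet hx i n⟩
    | merge _ _ g K =>
      obtain ⟨⟨j, m⟩, L, rfl, hg, rfl⟩ := List.map_eq_cons_iff.1 hK
      cases hg
      refine ⟨(j, n + m) :: L, by simp [zpow_add, zpowSyllables], ?_⟩
      simpa [zpow_add, mul_assoc] using zero_mem_wordNormSet_one _ _
    | cons _ h =>
      obtain ⟨M', rfl, hc⟩ := ih (hK ▸ h)
      exact ⟨(i, n) :: M', rfl,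
        by simpa [mul_assoc] using mem_wordNormSet_conj hc (FreeGroup.of i ^ n)⟩

theorem Collapses.exists_mem_wordNormSet (hx : ∀ i (n : ℕ), ν i (x i ^ n) = n * ν i (x i))
    {L : List (ι × ℤ)} {c : ℝ} (h : Collapses ν (zpowSyllables x L) c) :
    ∃ d ∈ wordNormSet FreeGroup.of (fun i => ν i (x i)) (zpowProd L), d ≤ c := by
  generalize hK : zpowSyllables x L = K at h
  induction h generalizing L with
  | nil hc =>
    obtain rfl := List.map_eq_nil_iff.1 hK
    exact ⟨0, zero_mem_wordNormSet_one _ _, hc⟩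
  | step hKM _ hle ih =>
    subst hK
    obtain ⟨M', hM', hc⟩ := hKM.exists_zpowSyllables_eq hx
    obtain ⟨d, hd, hdle⟩ := ih hM'
    exact ⟨_, by simpa using add_mem_wordNormSet_mul hc hd, by linarith⟩

end IntegralSyllables

theorem FRnorm_restricts_to_FGnorm_general {ι : Type*} {G : ι → Type*} [∀ i, Group (G i)]
    (ν : ∀ i, GroupSeminorm (G i)) (hν : ∀ i, IsConjInvariant (ν i)) (x : ∀ i, G i)
    (hx : ∀ i (n : ℕ), ν i (x i ^ n) = n * ν i (x i)) (w : FreeGroup ι) :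
    wordNorm (fun s : Σ i, G i => of s.2) (fun s => ν s.1 s.2)
        (FreeGroup.lift (fun i => of (x i)) w) =
      wordNorm FreeGroup.of (fun i => ν i (x i)) w := by
  refine csInf_eq_csInf_of_forall_exists_le (fun c hc => ?_) (fun c hc => ⟨c, ?_, le_rfl⟩)
  · obtain ⟨L, rfl⟩ := zpowProd_surjective w
    rw [← syllableProd_zpowSyllables] at hc
    exact (collapses_of_mem_wordNormSet hν hc).exists_mem_wordNormSet hx
  · exact wordNormSet_subset_map _ (fun i => ⟨i, x i⟩) (by simp) (by simp) w hc

theorem FRnorm_eq_wordNorm_sigma {A : Type*} (μ : A → ℝ≥0) (g : FR A) :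
    FRnorm (fun a => μ a) g =
      wordNorm (fun s : Σ _ : A, Multiplicative ℝ => (of (i := s.1) s.2 : FR A))
        (fun s => (μ s.1 • normGroupSeminorm (Multiplicative ℝ)) s.2) g := by
  rw [← wordNorm_comp_equiv
    ((Equiv.sigmaEquivProd A (Multiplicative ℝ)).trans
      (.prodCongr (.refl A) Multiplicative.toAdd)).symm]
  exact congrArg (wordNorm (genFR A) · g) (funext fun _ => mul_comm _ _)

/-- under the natural embedding `F(A) ≤ F_ℝ(A)`, the restriction of
`‖·‖_{F_ℝ(A;μ)}` to `F(A)` coincides with the word pseudonorm `‖·‖_{F(A;μ)}`. -/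
theorem FRnorm_restricts_to_FGnorm
    {A : Type*} (μ : A → ℝ) (hμ : ∀ a, 0 ≤ μ a) :
    ∀ w : FreeGroup A, FRnorm μ (FGtoFR A w) = wordNorm FreeGroup.of μ w := by
  intro w
  lift μ to A → ℝ≥0 using hμ
  rw [FRnorm_eq_wordNorm_sigma]
  simpa [FGtoFR, genFR, NNReal.smul_def] using FRnorm_restricts_to_FGnorm_general
    (fun a => μ a • normGroupSeminorm (Multiplicative ℝ)) (fun _ => isConjInvariant_of_comm _)
    (fun _ => .ofAdd 1) (fun a n => by simp [NNReal.smul_def, ← ofAdd_nsmul, mul_comm]) w
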